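/- Let δ ∈ (0,1) and suppose that (1/|T_L|) ∑_{z ∈ T_L} ⟨φ_o^1 φ_z^1⟩_{L,N,β} ≥ 1/N − δ. Then for every y ∈ B_{L/8} ∩ H_L one has ⟨φ_o^1 φ_y^1⟩_{L,N,β} ≥ 1/N − 2^{2d} δ, and for every y ∈ B_{L/8} ∖ H_L one has ⟨φ_o^1 φ_y^1⟩_{L,N,β} ≥ (1/N − 2^{2d} δ) · (β e^{−2dβ} / N)^{d−2}. -/

import Mathlib

open MeasureTheory Metric
open scoped RealInnerProductSpace BigOperators

/-- Vertices of the torus `(ℤ/Lℤ)^d`. -/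
abbrev TorusPt (d L : ℕ) := Fin d → ZMod L

/-- Nearest-neighbour adjacency on the torus: `x` and `y` differ by `±1 (mod L)`
in exactly one coordinate. -/
def torusAdj {d L : ℕ} (x y : TorusPt d L) : Prop :=
  ∃ j : Fin d, y = Function.update x j (x j + 1) ∨ y = Function.update x j (x j - 1)

instance {d L : ℕ} (x y : TorusPt d L) : Decidable (torusAdj x y) := by
  unfold torusAdj; infer_instance

/-- The unit sphere `S^{N-1} ⊂ ℝ^N`. -/
abbrev SpinSphere (N : ℕ) := sphere (0 : EuclideanSpace ℝ (Fin N)) 1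

/-- A spin configuration on the torus. -/
abbrev SpinCfg (d L N : ℕ) := TorusPt d L → SpinSphere N

/-- The uniform probability measure on the unit sphere `S^{N-1}`. -/
noncomputable def sphereUniform (N : ℕ) : Measure (SpinSphere N) :=
  ((volume : Measure (EuclideanSpace ℝ (Fin N))).toSphere Set.univ)⁻¹ •
    (volume : Measure (EuclideanSpace ℝ (Fin N))).toSphere

/-- The product over vertices of the uniform probability measures on the sphere. -/
noncomputable def spinMeasure (d L N : ℕ) [NeZero L] : Measure (SpinCfg d L N) :=
  Measure.pi fun _ : TorusPt d L => sphereUniform N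

/-- The Hamiltonian `H(φ) = -∑_{{x,y} edge} φ_x · φ_y`; every unordered
nearest-neighbour edge appears exactly twice in the double sum below. -/
noncomputable def hamiltonian {d L N : ℕ} [NeZero L] (φ : SpinCfg d L N) : ℝ :=
  -(1 / 2) * ∑ x : TorusPt d L, ∑ y : TorusPt d L,
    if torusAdj x y then
      ⟪(φ x : EuclideanSpace ℝ (Fin N)), (φ y : EuclideanSpace ℝ (Fin N))⟫
    else 0

/-- The Gibbs expectation `⟨f⟩_{L,N,β}`. -/
noncomputable def gibbsExp (d L N : ℕ) [NeZero L] (β : ℝ) (f : SpinCfg d L N → ℝ) : ℝ :=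
  (∫ φ, Real.exp (-β * hamiltonian φ) ∂(spinMeasure d L N))⁻¹ *
    ∫ φ, f φ * Real.exp (-β * hamiltonian φ) ∂(spinMeasure d L N)

/-- The spin-spin correlation `⟨φ_x ⬝ φ_y⟩_{L,N,β}`. -/
noncomputable def corrDot (d L N : ℕ) [NeZero L] (β : ℝ) (x y : TorusPt d L) : ℝ :=
  gibbsExp d L N β fun φ =>
    ⟪(φ x : EuclideanSpace ℝ (Fin N)), (φ y : EuclideanSpace ℝ (Fin N))⟫

/-- The correlation `⟨φ_x^1 φ_y^1⟩_{L,N,β}` of first components. -/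
noncomputable def corrOne (d L N : ℕ) [NeZero L] [NeZero N] (β : ℝ) (x y : TorusPt d L) : ℝ :=
  gibbsExp d L N β fun φ =>
    (φ x : EuclideanSpace ℝ (Fin N)) 0 * (φ y : EuclideanSpace ℝ (Fin N)) 0

/-- The origin of the torus. -/
def torusOrigin (d L : ℕ) : TorusPt d L := fun _ => 0

/-- The point `n • e_i` on the `i`-th cartesian axis. -/
def axisPt (d L : ℕ) (i : Fin d) (n : ℕ) : TorusPt d L :=
  fun k => if k = i then (n : ZMod L) else 0

/-- The sup torus norm `‖z‖_∞ = max_i min(z_i, L - z_i)`. -/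
def tnormInf {d L : ℕ} (z : TorusPt d L) : ℕ :=
  Finset.univ.sup fun i : Fin d => min (z i).val (L - (z i).val)

/-- Reflection of torus sites through the plane of sites `{x : x_i = m}`:
`Θ(x)_i = 2m - x_i (mod L)` and the other coordinates are unchanged. -/
def reflSite {d L : ℕ} (i : Fin d) (m : ℕ) (x : TorusPt d L) : TorusPt d L :=
  Function.update x i (2 * (m : ZMod L) - x i)

/-- Membership in the half-torus `T_L^+ = {x : x_i - m (mod L) ∈ {0,…,L/2}}`. -/
def inPlusSite {d L : ℕ} (i : Fin d) (m : ℕ) (x : TorusPt d L) : Prop :=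
  (x i - (m : ZMod L)).val ≤ L / 2

/-- Membership in the other half-torus `T_L^- = Θ(T_L^+)`. -/
def inMinusSite {d L : ℕ} (i : Fin d) (m : ℕ) (x : TorusPt d L) : Prop :=
  inPlusSite i m (reflSite i m x)

/-- Membership in the fixed-point set `T_L^R = {x : x_i = m or x_i = m + L/2 (mod L)}`. -/
def inFixedSite {d L : ℕ} (i : Fin d) (m : ℕ) (x : TorusPt d L) : Prop :=
  (x i - (m : ZMod L)).val = 0 ∨ (x i - (m : ZMod L)).val = L / 2

instance {d L : ℕ} (i : Fin d) (m : ℕ) : DecidablePred (inPlusSite (d := d) (L := L) i m) :=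
  fun x => by unfold inPlusSite; infer_instance

instance {d L : ℕ} (i : Fin d) (m : ℕ) : DecidablePred (inMinusSite (d := d) (L := L) i m) :=
  fun x => by unfold inMinusSite inPlusSite; infer_instance

instance {d L : ℕ} (i : Fin d) (m : ℕ) : DecidablePred (inFixedSite (d := d) (L := L) i m) :=
  fun x => by unfold inFixedSite; infer_instance

/-- Reflection through sites acting on spin configurations: `(Θφ)_x = φ_{Θ(x)}`. -/
def reflSiteCfg {d L N : ℕ} (i : Fin d) (m : ℕ) (φ : SpinCfg d L N) : SpinCfg d L N :=
  fun x => φ (reflSite i m x)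

/-- The set `H_L` of vertices with all coordinates nonzero, together with the
nonzero points of the cartesian axes. -/
def inHL {d L : ℕ} (x : TorusPt d L) : Prop :=
  (∀ j, x j ≠ 0) ∨ ∃ i, x i ≠ 0 ∧ ∀ j, j ≠ i → x j = 0

/-- `ẑ_i = min(z_i, L - z_i)`, the torus distance of the `i`-th coordinate from `0`. -/
def hatCoord {d L : ℕ} (z : TorusPt d L) (i : Fin d) : ℕ :=
  min (z i).val (L - (z i).val)

/-- The box `Q_z = {x : ∀ i, x_i ≤ ẑ_i or x_i > L - ẑ_i}` with corner `z`. -/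
def inBoxQ {d L : ℕ} (z x : TorusPt d L) : Prop :=
  ∀ i, (x i).val ≤ hatCoord z i ∨ L - hatCoord z i < (x i).val
section Helpers

/-- A linear isometry acting on the sphere. -/
noncomputable def sphMap {N : ℕ} (e : EuclideanSpace ℝ (Fin N) ≃ₗᵢ[ℝ] EuclideanSpace ℝ (Fin N))
    (v : SpinSphere N) : SpinSphere N :=
  ⟨e v, by
    have := v.2
    rw [mem_sphere_zero_iff_norm] at this ⊢
    rw [e.norm_map, this]⟩

lemma sphMap_continuous {N : ℕ}
    (e : EuclideanSpace ℝ (Fin N) ≃ₗᵢ[ℝ] EuclideanSpace ℝ (Fin N)) :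
    Continuous (sphMap e) :=
  (e.continuous.comp continuous_subtype_val).subtype_mk _

open scoped Pointwise in
lemma sphMap_toSphere {N : ℕ}
    (e : EuclideanSpace ℝ (Fin N) ≃ₗᵢ[ℝ] EuclideanSpace ℝ (Fin N)) :
    MeasurePreserving (sphMap e)
      ((volume : Measure (EuclideanSpace ℝ (Fin N))).toSphere)
      ((volume : Measure (EuclideanSpace ℝ (Fin N))).toSphere) := by
  refine ⟨(sphMap_continuous e).measurable, ?_⟩
  ext s hs
  rw [Measure.map_apply (sphMap_continuous e).measurable hs,
    Measure.toSphere_apply' _ hs,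
    Measure.toSphere_apply' _ ((sphMap_continuous e).measurable hs)]
  congr 1
  have himg : (Set.Ioo (0 : ℝ) 1 • (((↑) : SpinSphere N → EuclideanSpace ℝ (Fin N)) ''
      (sphMap e ⁻¹' s))) = e.toMeasurableEquiv ⁻¹' (Set.Ioo (0 : ℝ) 1 • ((↑) '' s)) := by
    ext v
    simp only [Set.mem_smul, Set.mem_preimage, Set.mem_image]
    constructor
    · rintro ⟨r, hr, _, ⟨u, hu, rfl⟩, rfl⟩
      refine ⟨r, hr, _, ⟨_, hu, rfl⟩, ?_⟩
      simp [sphMap]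
    · rintro ⟨r, hr, _, ⟨u, hu, rfl⟩, h⟩
      refine ⟨r, hr, _, ⟨sphMap e.symm u, ?_, rfl⟩, ?_⟩
      · have : sphMap e (sphMap e.symm u) = u := by
          apply Subtype.ext
          simp [sphMap]
        simpa [this] using hu
      · apply e.injective
        simpa [sphMap] using h
  rw [himg]
  exact (e.measurePreserving).measure_preimage_equiv (f := e.toMeasurableEquiv) _

lemma sphMap_mp {N : ℕ}
    (e : EuclideanSpace ℝ (Fin N) ≃ₗᵢ[ℝ] EuclideanSpace ℝ (Fin N)) :
    MeasurePreserving (sphMap e) (sphereUniform N) (sphereUniform N) :=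
  (sphMap_toSphere e).smul_measure _

instance sphProb (N : ℕ) [NeZero N] : IsProbabilityMeasure (sphereUniform N) := by
  constructor
  unfold sphereUniform
  rw [Measure.smul_apply, smul_eq_mul]
  have : Nontrivial (EuclideanSpace ℝ (Fin N)) := by
    have : Nonempty (Fin N) := ⟨0⟩
    infer_instance
  apply ENNReal.inv_mul_cancel
  · rw [Ne, Measure.measure_univ_eq_zero]
    exact Measure.toSphere_ne_zero _
  · exact measure_ne_top _ _

instance spinProb (d L N : ℕ) [NeZero L] [NeZero N] :
    IsProbabilityMeasure (spinMeasure d L N) := by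
  unfold spinMeasure; infer_instance

variable {d L N : ℕ} [NeZero L]

lemma ham_continuous : Continuous (hamiltonian : SpinCfg d L N → ℝ) := by
  unfold hamiltonian
  refine continuous_const.mul (continuous_finsetSum _ fun x _ =>
    continuous_finsetSum _ fun y _ => ?_)
  split_ifs
  · fun_prop
  · fun_prop

lemma coord_continuous (x : TorusPt d L) (i : Fin N) :
    Continuous (fun φ : SpinCfg d L N => (φ x : EuclideanSpace ℝ (Fin N)) i) := by
  fun_prop

lemma cont_integrable [NeZero N] {f : SpinCfg d L N → ℝ} (hf : Continuous f) :
    Integrable f (spinMeasure d L N) :=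
  hf.integrable_of_hasCompactSupport (HasCompactSupport.of_compactSpace f)

lemma wt_continuous (β : ℝ) :
    Continuous (fun φ : SpinCfg d L N => Real.exp (-β * hamiltonian φ)) :=
  Real.continuous_exp.comp (continuous_const.mul ham_continuous)

lemma Z_pos [NeZero N] (β : ℝ) :
    0 < ∫ φ, Real.exp (-β * hamiltonian φ) ∂(spinMeasure d L N) :=
  integral_exp_pos (cont_integrable (wt_continuous β))

lemma gibbs_add [NeZero N] (β : ℝ) {f g : SpinCfg d L N → ℝ} (hf : Continuous f)
    (hg : Continuous g) :
    gibbsExp d L N β (fun φ => f φ + g φ) = gibbsExp d L N β f + gibbsExp d L N β g := by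
  unfold gibbsExp
  have h := integral_add (cont_integrable (hf.mul (wt_continuous β)))
    (cont_integrable (hg.mul (wt_continuous β)))
  simp only [Pi.mul_apply] at h
  rw [← mul_add, ← h]
  simp only [add_mul]

lemma gibbs_smul (β c : ℝ) (f : SpinCfg d L N → ℝ) :
    gibbsExp d L N β (fun φ => c * f φ) = c * gibbsExp d L N β f := by
  unfold gibbsExp
  simp only [mul_assoc]
  rw [integral_const_mul]
  ring

lemma gibbs_sum [NeZero N] (β : ℝ) {ι : Type*} (s : Finset ι) (f : ι → SpinCfg d L N → ℝ)
    (hf : ∀ i, Continuous (f i)) :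
    gibbsExp d L N β (fun φ => ∑ i ∈ s, f i φ) = ∑ i ∈ s, gibbsExp d L N β (f i) := by
  unfold gibbsExp
  have h := integral_finsetSum s
    (fun i _ => cont_integrable ((hf i).mul (wt_continuous β)))
  simp only [Pi.mul_apply] at h
  rw [← Finset.mul_sum, ← h]
  simp only [Finset.sum_mul]

lemma gibbs_nonneg [NeZero N] (β : ℝ) {f : SpinCfg d L N → ℝ} (hf : ∀ φ, 0 ≤ f φ) :
    0 ≤ gibbsExp d L N β f := by
  unfold gibbsExp
  exact mul_nonneg (inv_nonneg.2 (Z_pos β).le)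
    (integral_nonneg fun φ => mul_nonneg (hf φ) (Real.exp_pos _).le)

lemma gibbs_one [NeZero N] (β : ℝ) : gibbsExp d L N β (fun _ => 1) = 1 := by
  unfold gibbsExp
  simp only [one_mul]
  exact inv_mul_cancel₀ (Z_pos β).ne'

lemma gibbs_mp [NeZero N] (β : ℝ) (T : SpinCfg d L N → SpinCfg d L N)
    (hT : MeasurePreserving T (spinMeasure d L N) (spinMeasure d L N))
    (hH : ∀ φ, hamiltonian (T φ) = hamiltonian φ)
    {f : SpinCfg d L N → ℝ} (hf : Continuous f) :
    gibbsExp d L N β (fun φ => f (T φ)) = gibbsExp d L N β f := by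
  unfold gibbsExp
  congr 1
  have h := integral_map hT.measurable.aemeasurable (μ := spinMeasure d L N)
    (f := fun φ => f φ * Real.exp (-β * hamiltonian φ))
    (hf.mul (wt_continuous β)).aestronglyMeasurable
  rw [hT.map_eq] at h
  rw [h]
  simp only [hH]

lemma glob_mp [NeZero N]
    (e : TorusPt d L → EuclideanSpace ℝ (Fin N) ≃ₗᵢ[ℝ] EuclideanSpace ℝ (Fin N)) :
    MeasurePreserving (fun (φ : SpinCfg d L N) x => sphMap (e x) (φ x))
      (spinMeasure d L N) (spinMeasure d L N) :=
  measurePreserving_pi _ _ (fun x => sphMap_mp (e x))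

lemma corr_diag [NeZero N] (β : ℝ) (x : TorusPt d L) : corrOne d L N β x x = 1 / N := by
  have hi : ∀ i : Fin N, gibbsExp d L N β (fun φ =>
      (φ x : EuclideanSpace ℝ (Fin N)) i * (φ x : EuclideanSpace ℝ (Fin N)) i)
      = corrOne d L N β x x := by
    intro i
    let e := LinearIsometryEquiv.piLpCongrLeft 2 ℝ ℝ (Equiv.swap (0 : Fin N) i)
    have := gibbs_mp β (fun (φ : SpinCfg d L N) x => sphMap e (φ x)) (glob_mp fun _ => e)
      (by
        intro φ
        unfold hamiltonian
        simp only [sphMap, LinearIsometryEquiv.inner_map_map])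
      (f := fun φ => (φ x : EuclideanSpace ℝ (Fin N)) 0 * (φ x : EuclideanSpace ℝ (Fin N)) 0)
      ((coord_continuous x 0).mul (coord_continuous x 0))
    rw [corrOne, ← this]
    congr 1
  have hs := gibbs_sum (d := d) (L := L) (N := N) β Finset.univ (fun i φ =>
      (φ x : EuclideanSpace ℝ (Fin N)) i * (φ x : EuclideanSpace ℝ (Fin N)) i)
      (fun i => (coord_continuous x i).mul (coord_continuous x i))
  have h1 : (fun φ : SpinCfg d L N => ∑ i, (φ x : EuclideanSpace ℝ (Fin N)) i *
      (φ x : EuclideanSpace ℝ (Fin N)) i) = fun _ => 1 := by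
    ext φ
    have hn := (φ x).2
    rw [mem_sphere_zero_iff_norm] at hn
    have := EuclideanSpace.real_norm_sq_eq (φ x : EuclideanSpace ℝ (Fin N))
    rw [hn] at this
    simp only [← sq]
    rw [← this]
    try norm_num
  rw [h1, gibbs_one, Finset.sum_congr rfl (fun i _ => hi i)] at hs
  simp only [Finset.sum_const, Finset.card_univ, Fintype.card_fin, nsmul_eq_mul] at hs
  have hN : (N : ℝ) ≠ 0 := Nat.cast_ne_zero.2 (NeZero.ne N)
  field_simp
  linarith

lemma corr_symm [NeZero N] (β : ℝ) (x y : TorusPt d L) :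
    corrOne d L N β x y = corrOne d L N β y x := by
  unfold corrOne
  simp only [mul_comm]

lemma adj_shift (a x y : TorusPt d L) : torusAdj (x + a) (y + a) ↔ torusAdj x y := by
  have key : ∀ (j : Fin d) (c : ZMod L),
      y + a = Function.update (x + a) j ((x + a) j + c) ↔
        y = Function.update x j (x j + c) := by
    intro j c
    constructor
    · intro h
      funext k
      have hk := congrFun h k
      by_cases hkj : k = j
      · subst hkj
        simp at hk ⊢
        linear_combination hk
      · simpa [hkj] using hk
    · intro h
      funext k
      have hk := congrFun h k
      by_cases hkj : k = j
      · subst hkj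
        simp at hk ⊢
        linear_combination hk
      · simpa [hkj] using hk
  unfold torusAdj
  simp only [sub_eq_add_neg, key]

lemma corr_shift [NeZero N] (β : ℝ) (a x y : TorusPt d L) :
    corrOne d L N β (x + a) (y + a) = corrOne d L N β x y := by
  have hmp : MeasurePreserving (fun (φ : SpinCfg d L N) x => φ (x + a))
      (spinMeasure d L N) (spinMeasure d L N) := by
    have := (measurePreserving_piCongrLeft
      (fun _ : TorusPt d L => sphereUniform N) (Equiv.addRight a)).symm
    exact this
  have := gibbs_mp β (fun (φ : SpinCfg d L N) x => φ (x + a)) hmp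
    (by
      intro φ
      unfold hamiltonian
      congr 1
      rw [← Equiv.sum_comp (Equiv.addRight a) (fun x : TorusPt d L => ∑ y : TorusPt d L,
        if torusAdj x y then
          ⟪(φ x : EuclideanSpace ℝ (Fin N)), (φ y : EuclideanSpace ℝ (Fin N))⟫ else 0)]
      refine Finset.sum_congr rfl fun x _ => ?_
      rw [← Equiv.sum_comp (Equiv.addRight a) (fun y : TorusPt d L =>
        if torusAdj (Equiv.addRight a x) y then
          ⟪(φ (Equiv.addRight a x) : EuclideanSpace ℝ (Fin N)),
            (φ y : EuclideanSpace ℝ (Fin N))⟫ else 0)]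
      refine Finset.sum_congr rfl fun y _ => ?_
      simp only [Equiv.coe_addRight, adj_shift])
    (f := fun φ => (φ x : EuclideanSpace ℝ (Fin N)) 0 * (φ y : EuclideanSpace ℝ (Fin N)) 0)
    ((coord_continuous x 0).mul (coord_continuous y 0))
  exact this

lemma corr_triangle [NeZero N] (β : ℝ) (x y z : TorusPt d L) :
    4 * corrOne d L N β x z + 4 * corrOne d L N β y z - 6 / N ≤ 2 * corrOne d L N β x y := by
  have h0 := gibbs_nonneg (d := d) (L := L) (N := N) β (f := fun φ =>
    ((φ x : EuclideanSpace ℝ (Fin N)) 0 + (φ y : EuclideanSpace ℝ (Fin N)) 0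
      - 2 * (φ z : EuclideanSpace ℝ (Fin N)) 0) ^ 2) (fun φ => sq_nonneg _)
  let m (u v : TorusPt d L) : SpinCfg d L N → ℝ := fun φ =>
    (φ u : EuclideanSpace ℝ (Fin N)) 0 * (φ v : EuclideanSpace ℝ (Fin N)) 0
  have hm : ∀ u v, Continuous (m u v) := fun u v =>
    (coord_continuous u 0).mul (coord_continuous v 0)
  have hc : ∀ (c : ℝ) u v, Continuous (fun φ => c * m u v φ) := fun c u v =>
    continuous_const.mul (hm u v)
  have hG : ∀ u v, gibbsExp d L N β (m u v) = corrOne d L N β u v := fun u v => rfl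
  have he : (fun φ : SpinCfg d L N => ((φ x : EuclideanSpace ℝ (Fin N)) 0 +
      (φ y : EuclideanSpace ℝ (Fin N)) 0 - 2 * (φ z : EuclideanSpace ℝ (Fin N)) 0) ^ 2)
      = fun φ => (m x x φ + (m y y φ + 4 * m z z φ)) + (2 * m x y φ + (-4 * m x z φ
        + -4 * m y z φ)) := by
    ext φ
    simp only [m]
    ring
  have k1 : Continuous (fun φ => m y y φ + 4 * m z z φ) := (hm y y).add (hc 4 z z)
  have k2 : Continuous (fun φ => m x x φ + (m y y φ + 4 * m z z φ)) := (hm x x).add k1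
  have k3 : Continuous (fun φ => -4 * m x z φ + -4 * m y z φ) := (hc (-4) x z).add (hc (-4) y z)
  have k4 : Continuous (fun φ => 2 * m x y φ + (-4 * m x z φ + -4 * m y z φ)) :=
    (hc 2 x y).add k3
  rw [he, gibbs_add β k2 k4, gibbs_add β (hm x x) k1, gibbs_add β (hm y y) (hc 4 z z),
    gibbs_add β (hc 2 x y) k3, gibbs_add β (hc (-4) x z) (hc (-4) y z), gibbs_smul, gibbs_smul, gibbs_smul, gibbs_smul,
    hG, hG, hG, hG, hG, hG, corr_diag, corr_diag, corr_diag] at h0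
  have : (6 : ℝ) / N = 6 * (1 / N) := by ring
  linarith

/-- The sign attached to a Boolean. -/
def bsign (b : Bool) : ℝ := if b then 1 else -1

lemma bsign_sq (b : Bool) : bsign b * bsign b = 1 := by cases b <;> simp [bsign]

lemma sinh_factor (c u : ℝ) (hc : 0 ≤ c) : ∃ k : ℝ, 0 ≤ k ∧ Real.sinh (c * u) = k * u := by
  rcases eq_or_ne u 0 with rfl | hu
  · exact ⟨0, le_rfl, by simp⟩
  · refine ⟨Real.sinh (c * u) / u, ?_, by field_simp⟩
    rcases lt_or_gt_of_ne hu with h | h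
    · exact div_nonneg_of_nonpos (Real.sinh_nonpos_iff.2 (mul_nonpos_of_nonneg_of_nonpos hc h.le))
        h.le
    · exact div_nonneg (Real.sinh_nonneg_iff.2 (mul_nonneg hc h.le)) h.le

lemma exp_sign (c a b : ℝ) (hc : 0 ≤ c) : ∃ p q : ℝ, 0 ≤ p ∧ 0 ≤ q ∧ ∀ s t : Bool,
    Real.exp (c * ((bsign s * a) * (bsign t * b))) = p + q * ((bsign s * a) * (bsign t * b)) := by
  obtain ⟨k, hk, h⟩ := sinh_factor c (a * b) hc
  refine ⟨Real.cosh (c * (a * b)), k, (Real.cosh_pos _).le, hk, fun s t => ?_⟩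
  have h1 := Real.cosh_add_sinh (c * (a * b))
  have h2 := Real.cosh_sub_sinh (c * (a * b))
  rw [h] at h1 h2
  cases s <;> cases t <;> simp only [bsign, if_true, Bool.false_eq_true, if_false] <;>
    ring_nf at h1 h2 ⊢ <;> linarith

/-- Griffiths' first inequality, for a product of ferromagnetic two-body factors. -/
lemma griffiths {V ι : Type*} [Fintype V] [DecidableEq V] (a : V → ℝ)
    (s : Finset ι) (p q : ι → V) (c : ι → ℝ) (hc : ∀ i, 0 ≤ c i) :
    ∀ n : V → ℕ, 0 ≤ ∑ σ : V → Bool, (∏ x, (bsign (σ x) * a x) ^ n x) *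
      ∏ i ∈ s, Real.exp (c i * ((bsign (σ (p i)) * a (p i)) * (bsign (σ (q i)) * a (q i)))) := by
  classical
  induction s using Finset.induction_on with
  | empty =>
    intro n
    simp only [Finset.prod_empty, mul_one]
    have := (Finset.prod_univ_sum (fun _ : V => (Finset.univ : Finset Bool))
      (fun x b => (bsign b * a x) ^ n x))
    rw [Fintype.piFinset_univ] at this
    rw [← this]
    refine Finset.prod_nonneg fun x _ => ?_
    simp only [Fintype.sum_bool, bsign, if_true, Bool.false_eq_true, if_false]
    rcases Nat.even_or_odd (n x) with h | h
    · have := h.pow_nonneg (1 * a x)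
      have := h.pow_nonneg (-1 * a x)
      linarith
    · rw [neg_one_mul, h.neg_pow, one_mul]
      simp
  | insert i s his ih =>
    intro n
    obtain ⟨P, Q, hP, hQ, hPQ⟩ := exp_sign (c i) (a (p i)) (a (q i)) (hc i)
    simp only [Finset.prod_insert his, hPQ]
    have h1 := ih n
    have h2 := ih (n + Pi.single (p i) 1 + Pi.single (q i) 1)
    have hp : ∀ (σ : V → Bool), (∏ x, (bsign (σ x) * a x) ^
        (n + Pi.single (p i) 1 + Pi.single (q i) 1 : V → ℕ) x) =
        (∏ x, (bsign (σ x) * a x) ^ n x) *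
          ((bsign (σ (p i)) * a (p i)) * (bsign (σ (q i)) * a (q i))) := by
      intro σ
      have hs : ∀ v : V, ∏ x, (bsign (σ x) * a x) ^ (Pi.single v 1 : V → ℕ) x =
          bsign (σ v) * a v := by
        intro v
        rw [Finset.prod_eq_single v]
        · simp
        · intro b _ hb
          simp [hb]
        · simp
      simp only [Pi.add_apply, pow_add, Finset.prod_mul_distrib, hs]
      ring
    simp only [hp] at h2
    have h3 := add_nonneg (mul_nonneg hP h1) (mul_nonneg hQ h2)
    rw [Finset.mul_sum, Finset.mul_sum, ← Finset.sum_add_distrib] at h3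
    refine h3.trans_eq (Finset.sum_congr rfl fun σ _ => ?_)
    ring

/-- Flip of the first coordinate. -/
noncomputable def flipIso (N : ℕ) [NeZero N] (b : Bool) :
    EuclideanSpace ℝ (Fin N) ≃ₗᵢ[ℝ] EuclideanSpace ℝ (Fin N) :=
  LinearIsometryEquiv.piLpCongrRight 2 (fun i : Fin N =>
    if i = 0 ∧ b = false then LinearIsometryEquiv.neg ℝ else LinearIsometryEquiv.refl ℝ ℝ)

lemma flipIso_zero [NeZero N] (b : Bool) (v : EuclideanSpace ℝ (Fin N)) :
    flipIso N b v 0 = bsign b * v 0 := by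
  cases b <;> simp [flipIso, bsign, LinearIsometryEquiv.piLpCongrRight_apply]

lemma flipIso_ne [NeZero N] (b : Bool) (v : EuclideanSpace ℝ (Fin N)) (i : Fin N) (hi : i ≠ 0) :
    flipIso N b v i = v i := by
  cases b <;> simp [flipIso, LinearIsometryEquiv.piLpCongrRight_apply, hi]

lemma corr_nonneg [NeZero N] (β : ℝ) (hβ : 0 ≤ β) (o y : TorusPt d L) :
    0 ≤ corrOne d L N β o y := by
  classical
  unfold corrOne gibbsExp
  refine mul_nonneg (inv_nonneg.2 (Z_pos β).le) ?_
  set F : SpinCfg d L N → ℝ := fun φ => (φ o : EuclideanSpace ℝ (Fin N)) 0 *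
    (φ y : EuclideanSpace ℝ (Fin N)) 0 * Real.exp (-β * hamiltonian φ) with hF
  let T (σ : TorusPt d L → Bool) (φ : SpinCfg d L N) : SpinCfg d L N :=
    fun x => sphMap (flipIso N (σ x)) (φ x)
  have hFc : Continuous F :=
    ((coord_continuous o 0).mul (coord_continuous y 0)).mul (wt_continuous β)
  have hTc : ∀ σ, Continuous (T σ) := fun σ =>
    continuous_pi fun x => (sphMap_continuous _).comp (continuous_apply x)
  have hT : ∀ σ, ∫ φ, F (T σ φ) ∂(spinMeasure d L N) = ∫ φ, F φ ∂(spinMeasure d L N) := by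
    intro σ
    have hmp : MeasurePreserving (T σ) (spinMeasure d L N) (spinMeasure d L N) :=
      glob_mp fun x => flipIso N (σ x)
    have h := integral_map hmp.measurable.aemeasurable (μ := spinMeasure d L N) (f := F)
      hFc.aestronglyMeasurable
    rw [hmp.map_eq] at h
    exact h.symm
  have hpt : ∀ φ, 0 ≤ ∑ σ, F (T σ φ) := by
    intro φ
    let a : TorusPt d L → ℝ := fun x => (φ x : EuclideanSpace ℝ (Fin N)) 0
    let R : TorusPt d L → TorusPt d L → ℝ := fun x z => ∑ i ∈ Finset.univ.erase (0 : Fin N),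
      (φ x : EuclideanSpace ℝ (Fin N)) i * (φ z : EuclideanSpace ℝ (Fin N)) i
    let c : TorusPt d L × TorusPt d L → ℝ := fun p => if torusAdj p.1 p.2 then β / 2 else 0
    have hc : ∀ p, 0 ≤ c p := by
      intro p
      simp only [c]
      split_ifs <;> linarith
    have hin : ∀ σ x z, ⟪(T σ φ x : EuclideanSpace ℝ (Fin N)),
        (T σ φ z : EuclideanSpace ℝ (Fin N))⟫ =
        (bsign (σ x) * a x) * (bsign (σ z) * a z) + R x z := by
      intro σ x z
      rw [PiLp.inner_apply, ← Finset.add_sum_erase _ _ (Finset.mem_univ (0 : Fin N))]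
      congr 1
      · simp only [T, sphMap, flipIso_zero, a]
        simp
        ring
      · refine Finset.sum_congr rfl fun i hi => ?_
        simp only [T, sphMap, flipIso_ne _ _ i (Finset.ne_of_mem_erase hi)]
        simp
        ring
    have hH : ∀ σ, -β * hamiltonian (T σ φ) = (∑ p, c p * R p.1 p.2) +
        ∑ p, c p * ((bsign (σ p.1) * a p.1) * (bsign (σ p.2) * a p.2)) := by
      intro σ
      unfold hamiltonian
      rw [← Finset.sum_add_distrib, Fintype.sum_prod_type, ← mul_assoc, Finset.mul_sum]
      refine Finset.sum_congr rfl fun x _ => ?_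
      rw [Finset.mul_sum]
      refine Finset.sum_congr rfl fun z _ => ?_
      rw [hin]
      simp only [c]
      split_ifs
      · ring
      · ring
    have hg := griffiths a Finset.univ Prod.fst Prod.snd c hc (Pi.single o 1 + Pi.single y 1)
    have hsum : ∑ σ, F (T σ φ) = Real.exp (∑ p, c p * R p.1 p.2) *
        ∑ σ : TorusPt d L → Bool,
          (∏ x, (bsign (σ x) * a x) ^ (Pi.single o 1 + Pi.single y 1 : TorusPt d L → ℕ) x) *
          ∏ p, Real.exp (c p * ((bsign (σ p.1) * a p.1) * (bsign (σ p.2) * a p.2))) := by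
      rw [Finset.mul_sum]
      refine Finset.sum_congr rfl fun σ _ => ?_
      have hs : ∀ v : TorusPt d L, ∏ x, (bsign (σ x) * a x) ^
          (Pi.single v 1 : TorusPt d L → ℕ) x = bsign (σ v) * a v := by
        intro v
        rw [Finset.prod_eq_single v]
        · simp
        · intro b _ hb
          simp [hb]
        · simp
      simp only [Pi.add_apply, pow_add, Finset.prod_mul_distrib, hs]
      rw [← Real.exp_sum]
      simp only [hF]
      rw [hH, Real.exp_add]
      simp only [T, sphMap, flipIso_zero, a]
      ring
    rw [hsum]
    exact mul_nonneg (Real.exp_pos _).le hg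
  have h1 : 0 ≤ ∫ φ, ∑ σ, F (T σ φ) ∂(spinMeasure d L N) := integral_nonneg hpt
  have h2 : ∀ σ, Integrable (fun φ => F (T σ φ)) (spinMeasure d L N) := fun σ =>
    cont_integrable (hFc.comp (hTc σ))
  rw [integral_finsetSum _ (fun σ _ => h2 σ),
    Finset.sum_congr rfl (fun σ _ => hT σ), Finset.sum_const, nsmul_eq_mul] at h1
  have hcard : (0 : ℝ) < ((Finset.univ : Finset (TorusPt d L → Bool)).card : ℝ) :=
    Nat.cast_pos.2 (Finset.card_pos.2 Finset.univ_nonempty)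
  exact nonneg_of_mul_nonneg_right h1 hcard

/-- The mean bound gives a uniform pointwise bound. -/
lemma pointwise_four [NeZero N] (β δ : ℝ)
    (hmean : 1 / (N : ℝ) - δ ≤
      (1 / (L : ℝ) ^ d) * ∑ z : TorusPt d L, corrOne d L N β (torusOrigin d L) z)
    (y : TorusPt d L) : 1 / (N : ℝ) - 4 * δ ≤ corrOne d L N β (torusOrigin d L) y := by
  set o := torusOrigin d L with ho
  have ho0 : o = 0 := rfl
  set S := ∑ z : TorusPt d L, corrOne d L N β o z with hS
  have hy : ∑ z : TorusPt d L, corrOne d L N β y z = S := by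
    rw [hS, ← Equiv.sum_comp (Equiv.addRight y)]
    refine Finset.sum_congr rfl fun z _ => ?_
    have := corr_shift (N := N) β y o z
    rw [← this, ho0, zero_add]
    rfl
  have hcard : ((Finset.univ : Finset (TorusPt d L)).card : ℝ) = (L : ℝ) ^ d := by
    simp [Finset.card_univ, ZMod.card]
  have hsum := Finset.sum_le_sum (s := (Finset.univ : Finset (TorusPt d L)))
    (fun z _ => corr_triangle (N := N) β o y z)
  rw [Finset.sum_sub_distrib, Finset.sum_add_distrib, ← Finset.mul_sum, ← Finset.mul_sum, hy,
    Finset.sum_const, Finset.sum_const, nsmul_eq_mul, nsmul_eq_mul, hcard] at hsum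
  have hLpos : (0 : ℝ) < (L : ℝ) ^ d :=
    pow_pos (Nat.cast_pos.2 (Nat.pos_of_ne_zero (NeZero.ne L))) d
  have hm2 : (L : ℝ) ^ d * (1 / (N : ℝ) - δ) ≤ S := by
    have := mul_le_mul_of_nonneg_left hmean hLpos.le
    rwa [← mul_assoc, mul_one_div_cancel hLpos.ne', one_mul] at this
  have h6 : (6 : ℝ) / N = 6 * (1 / N) := by ring
  rw [h6] at hsum
  have : (L : ℝ) ^ d * (1 / (N : ℝ) - 4 * δ) ≤ (L : ℝ) ^ d * corrOne d L N β o y := by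
    linarith
  exact le_of_mul_le_mul_left this hLpos

end Helpers

/-- **From a Cesàro-mean lower bound to point-wise lower bounds in `B_{L/8}`.**
If `δ ∈ (0,1)` and `(1/|T_L|) ∑_{z} ⟨φ_o^1 φ_z^1⟩ ≥ 1/N - δ`, then
`⟨φ_o^1 φ_y^1⟩ ≥ 1/N - 2^{2d} δ` for all `y ∈ B_{L/8} ∩ H_L`, and
`⟨φ_o^1 φ_y^1⟩ ≥ (1/N - 2^{2d} δ)(β e^{-2dβ}/N)^{d-2}` for all `y ∈ B_{L/8} ∖ H_L`. -/
theorem spin_mean_lower_bound_implies_pointwise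
    (d L N : ℕ) [NeZero L] [NeZero N] (hd : 2 ≤ d) (hL : Even L)
    (β : ℝ) (hβ : 0 ≤ β) (δ : ℝ) (hδ0 : 0 < δ) (hδ1 : δ < 1)
    (hmean : 1 / (N : ℝ) - δ ≤
      (1 / (L : ℝ) ^ d) * ∑ z : TorusPt d L, corrOne d L N β (torusOrigin d L) z) :
    (∀ y : TorusPt d L, (tnormInf y : ℝ) ≤ (L : ℝ) / 8 → inHL y →
        1 / (N : ℝ) - 2 ^ (2 * d) * δ ≤ corrOne d L N β (torusOrigin d L) y) ∧
      (∀ y : TorusPt d L, (tnormInf y : ℝ) ≤ (L : ℝ) / 8 → ¬ inHL y →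
        (1 / (N : ℝ) - 2 ^ (2 * d) * δ) * (β * Real.exp (-2 * d * β) / N) ^ (d - 2) ≤
          corrOne d L N β (torusOrigin d L) y) := by
  have hpow : (4 : ℝ) ≤ 2 ^ (2 * d) := by
    calc (4 : ℝ) = 2 ^ 2 := by norm_num
      _ ≤ 2 ^ (2 * d) := pow_le_pow_right₀ (by norm_num) (by omega)
  have hmain : ∀ y : TorusPt d L,
      1 / (N : ℝ) - 2 ^ (2 * d) * δ ≤ corrOne d L N β (torusOrigin d L) y := by
    intro y
    have := pointwise_four β δ hmean y
    have := mul_le_mul_of_nonneg_right hpow hδ0.le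
    linarith
  refine ⟨fun y _ _ => hmain y, fun y _ _ => ?_⟩
  have hN : (1 : ℝ) ≤ N := Nat.one_le_cast.2 (Nat.pos_of_ne_zero (NeZero.ne N))
  have hc0 : 0 ≤ β * Real.exp (-2 * d * β) / N := by positivity
  have hc1 : β * Real.exp (-2 * d * β) / N ≤ 1 := by
    rw [div_le_one (by linarith)]
    refine le_trans ?_ hN
    have hd' : (2 : ℝ) ≤ d := by exact_mod_cast hd
    have h1 : β ≤ Real.exp (2 * d * β) := by
      have := Real.add_one_le_exp (2 * d * β)
      nlinarith
    calc β * Real.exp (-2 * d * β) ≤ Real.exp (2 * d * β) * Real.exp (-2 * d * β) :=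
          mul_le_mul_of_nonneg_right h1 (Real.exp_pos _).le
      _ = 1 := by rw [← Real.exp_add]; simp
  have hp0 := pow_nonneg hc0 (d - 2)
  have hp1 := pow_le_one₀ hc0 hc1 (n := d - 2)
  rcases le_or_gt 0 (1 / (N : ℝ) - 2 ^ (2 * d) * δ) with h | h
  · exact (mul_le_of_le_one_right h hp1).trans (hmain y)
  · exact (mul_nonpos_of_nonpos_of_nonneg h.le hp0).trans (corr_nonneg β hβ _ y)
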